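/- Simulation of the λ-calculus in π, part 2: if Γ ⊢λ M : A in the simply typed λ-calculus, then ⟦M⟧πα : Γ ⊢π α:A, where ⟦M⟧πα = ⟦⟦M⟧α⟧ is the composition of the interpretation of λ into X with the encoding of X into π. -/

import Mathlib

/-! # Shared development: types, X-calculus, π-calculus, encodings -/

/-- Simple (Curry) types over infinitely many basic types. -/
inductive Ty : Type
  | base : ℕ → Ty
  | arrow : Ty → Ty → Ty
  deriving DecidableEq

/-- Contexts are (partial) maps from names to types; `upd` is (compatible) extension. -/
def upd {α : Type} [DecidableEq α] (Γ : α → Option Ty) (n : α) (A : Ty) : α → Option Ty :=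
  fun m => if m = n then some A else Γ m

def emptyCtx {α : Type} : α → Option Ty := fun _ => none

/-! ## The X-calculus: nets
Sockets and plugs are each drawn from a copy of ℕ (the two namespaces are kept apart
by position: sockets are always socket arguments, plugs are plug arguments). -/

inductive Net : Type
  | cap : ℕ → ℕ → Net                      -- ⟨x·α⟩ : socket x, plug α
  | exp : ℕ → Net → ℕ → ℕ → Net            -- (x̂ P α̂)·β : binds socket x, plug α in P
  | imp : Net → ℕ → ℕ → ℕ → Net → Net      -- P α̂ [y] x̂ Q : binds α in P, x in Q
  | cut : Net → ℕ → ℕ → Net → Net          -- P α̂ † x̂ Q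
  | cutL : Net → ℕ → ℕ → Net → Net         -- P α̂ †← x̂ Q
  | cutR : Net → ℕ → ℕ → Net → Net         -- P α̂ →† x̂ Q
  deriving DecidableEq

/-- Free sockets of a net. -/
def fs : Net → Finset ℕ
  | .cap x _ => {x}
  | .exp x P _ _ => fs P \ {x}
  | .imp P _ y x Q => fs P ∪ {y} ∪ (fs Q \ {x})
  | .cut P _ x Q => fs P ∪ (fs Q \ {x})
  | .cutL P _ x Q => fs P ∪ (fs Q \ {x})
  | .cutR P _ x Q => fs P ∪ (fs Q \ {x})

/-- Free plugs of a net. -/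
def fp : Net → Finset ℕ
  | .cap _ a => {a}
  | .exp _ P a b => (fp P \ {a}) ∪ {b}
  | .imp P a _ _ Q => (fp P \ {a}) ∪ fp Q
  | .cut P a _ Q => (fp P \ {a}) ∪ fp Q
  | .cutL P a _ Q => (fp P \ {a}) ∪ fp Q
  | .cutR P a _ Q => (fp P \ {a}) ∪ fp Q

/-- `P` introduces the socket `x`. -/
def IntroS : Net → ℕ → Prop
  | .cap y _, x => y = x
  | .imp Q _ y _ R, x => y = x ∧ x ∉ fs Q ∪ fs R
  | _, _ => False

/-- `P` introduces the plug `α`. -/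
def IntroP : Net → ℕ → Prop
  | .cap _ b, a => b = a
  | .exp _ Q _ c, a => c = a ∧ a ∉ fp Q
  | _, _ => False

/-- Rename every free occurrence of the plug `d` in `P` to `a`  (P[a/d]). -/
def renP : Net → ℕ → ℕ → Net
  | .cap x b, d, a => .cap x (if b = d then a else b)
  | .exp x P b c, d, a => .exp x (if b = d then P else renP P d a) b (if c = d then a else c)
  | .imp P b y x Q, d, a => .imp (if b = d then P else renP P d a) b y x (renP Q d a)
  | .cut P b x Q, d, a => .cut (if b = d then P else renP P d a) b x (renP Q d a)
  | .cutL P b x Q, d, a => .cutL (if b = d then P else renP P d a) b x (renP Q d a)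
  | .cutR P b x Q, d, a => .cutR (if b = d then P else renP P d a) b x (renP Q d a)

/-- Rename every free occurrence of the socket `x` in `P` to `z`  (P[z/x]). -/
def renS : Net → ℕ → ℕ → Net
  | .cap y b, x, z => .cap (if y = x then z else y) b
  | .exp y P b c, x, z => .exp y (if y = x then P else renS P x z) b c
  | .imp P b y w Q, x, z =>
      .imp (renS P x z) b (if y = x then z else y) w (if w = x then Q else renS Q x z)
  | .cut P b w Q, x, z => .cut (renS P x z) b w (if w = x then Q else renS Q x z)
  | .cutL P b w Q, x, z => .cutL (renS P x z) b w (if w = x then Q else renS Q x z)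
  | .cutR P b w Q, x, z => .cutR (renS P x z) b w (if w = x then Q else renS Q x z)

/-- One-step reduction of X (compatible closure of the rules). -/
inductive StepX : Net → Net → Prop
  -- logical rules (α introduced on the left, x introduced on the right)
  | cap_cap (y a x b : ℕ) :
      StepX (.cut (.cap y a) a x (.cap x b)) (.cap y b)
  | exp_cap (y : ℕ) (P : Net) (b a x c : ℕ) (h : a ∉ fp P) :
      StepX (.cut (.exp y P b a) a x (.cap x c)) (.exp y P b c)
  | cap_imp (y a x : ℕ) (Q : Net) (b z : ℕ) (R : Net) (h : x ∉ fs Q ∪ fs R) :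
      StepX (.cut (.cap y a) a x (.imp Q b x z R)) (.imp Q b y z R)
  | exp_imp₁ (y : ℕ) (P : Net) (b a x : ℕ) (Q : Net) (c z : ℕ) (R : Net)
      (h1 : a ∉ fp P) (h2 : x ∉ fs Q ∪ fs R) :
      StepX (.cut (.exp y P b a) a x (.imp Q c x z R)) (.cut Q c y (.cut P b z R))
  | exp_imp₂ (y : ℕ) (P : Net) (b a x : ℕ) (Q : Net) (c z : ℕ) (R : Net)
      (h1 : a ∉ fp P) (h2 : x ∉ fs Q ∪ fs R) :
      StepX (.cut (.exp y P b a) a x (.imp Q c x z R)) (.cut (.cut Q c y P) b z R)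
  -- activation
  | actL (P : Net) (a x : ℕ) (Q : Net) (h : ¬ IntroP P a) :
      StepX (.cut P a x Q) (.cutL P a x Q)
  | actR (P : Net) (a x : ℕ) (Q : Net) (h : ¬ IntroS Q x) :
      StepX (.cut P a x Q) (.cutR P a x Q)
  -- left propagation
  | dL (y a x : ℕ) (P : Net) :
      StepX (.cutL (.cap y a) a x P) (.cut (.cap y a) a x P)
  | capL (y b a x : ℕ) (P : Net) (h : b ≠ a) :
      StepX (.cutL (.cap y b) a x P) (.cap y b)
  | exp_outsL (y : ℕ) (Q : Net) (b a x : ℕ) (P : Net) (c : ℕ)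
      (h : c ∉ fp Q ∪ fp P ∧ c ≠ a ∧ c ≠ b) :
      StepX (.cutL (.exp y Q b a) a x P) (.cut (.exp y (.cutL Q a x P) b c) c x P)
  | exp_insL (y : ℕ) (Q : Net) (b c a x : ℕ) (P : Net) (h : c ≠ a) :
      StepX (.cutL (.exp y Q b c) a x P) (.exp y (.cutL Q a x P) b c)
  | impL (Q : Net) (b z y a x : ℕ) (R P : Net) :
      StepX (.cutL (.imp Q b z y R) a x P) (.imp (.cutL Q a x P) b z y (.cutL R a x P))
  | cut_cutL (Q : Net) (b y a x : ℕ) (R P : Net) :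
      StepX (.cutL (.cut Q b y R) a x P) (.cut (.cutL Q a x P) b y (.cutL R a x P))
  -- right propagation
  | dR (P : Net) (a x b : ℕ) :
      StepX (.cutR P a x (.cap x b)) (.cut P a x (.cap x b))
  | capR (P : Net) (a x y b : ℕ) (h : y ≠ x) :
      StepX (.cutR P a x (.cap y b)) (.cap y b)
  | expR (P : Net) (a x y : ℕ) (Q : Net) (b c : ℕ) :
      StepX (.cutR P a x (.exp y Q b c)) (.exp y (.cutR P a x Q) b c)
  | imp_outsR (P : Net) (a x : ℕ) (Q : Net) (b y : ℕ) (R : Net) (z : ℕ)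
      (h : z ∉ fs P ∪ fs Q ∪ fs R ∧ z ≠ x ∧ z ≠ y) :
      StepX (.cutR P a x (.imp Q b x y R))
            (.cut P a z (.imp (.cutR P a x Q) b z y (.cutR P a x R)))
  | imp_insR (P : Net) (a x : ℕ) (Q : Net) (b z y : ℕ) (R : Net) (h : z ≠ x) :
      StepX (.cutR P a x (.imp Q b z y R)) (.imp (.cutR P a x Q) b z y (.cutR P a x R))
  | cut_cutR (P : Net) (a x : ℕ) (Q : Net) (b y : ℕ) (R : Net) :
      StepX (.cutR P a x (.cut Q b y R)) (.cut (.cutR P a x Q) b y (.cutR P a x R))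
  -- compatibility (closure under contexts)
  | expC (x : ℕ) {P P' : Net} (a b : ℕ) (h : StepX P P') : StepX (.exp x P a b) (.exp x P' a b)
  | impC₁ {P P' : Net} (a y x : ℕ) (Q : Net) (h : StepX P P') :
      StepX (.imp P a y x Q) (.imp P' a y x Q)
  | impC₂ (P : Net) (a y x : ℕ) {Q Q' : Net} (h : StepX Q Q') :
      StepX (.imp P a y x Q) (.imp P a y x Q')
  | cutC₁ {P P' : Net} (a x : ℕ) (Q : Net) (h : StepX P P') :
      StepX (.cut P a x Q) (.cut P' a x Q)
  | cutC₂ (P : Net) (a x : ℕ) {Q Q' : Net} (h : StepX Q Q') :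
      StepX (.cut P a x Q) (.cut P a x Q')
  | cutLC₁ {P P' : Net} (a x : ℕ) (Q : Net) (h : StepX P P') :
      StepX (.cutL P a x Q) (.cutL P' a x Q)
  | cutLC₂ (P : Net) (a x : ℕ) {Q Q' : Net} (h : StepX Q Q') :
      StepX (.cutL P a x Q) (.cutL P a x Q')
  | cutRC₁ {P P' : Net} (a x : ℕ) (Q : Net) (h : StepX P P') :
      StepX (.cutR P a x Q) (.cutR P' a x Q)
  | cutRC₂ (P : Net) (a x : ℕ) {Q Q' : Net} (h : StepX Q Q') :
      StepX (.cutR P a x Q) (.cutR P a x Q')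

/-- Multistep reduction of X: reflexive, transitive (and compatible) closure. -/
def RedX : Net → Net → Prop := Relation.ReflTransGen StepX

/-- Type assignment for X:  P ··· Γ ⊢ Δ  (Γ a context of sockets, Δ of plugs). -/
inductive TypesX : Net → (ℕ → Option Ty) → (ℕ → Option Ty) → Prop
  | cap (Γ Δ : ℕ → Option Ty) (y a : ℕ) (A : Ty) :
      TypesX (.cap y a) (upd Γ y A) (upd Δ a A)
  | exp {P : Net} {Γ Δ : ℕ → Option Ty} {x a : ℕ} {A B : Ty} (b : ℕ)
      (h : TypesX P (upd Γ x A) (upd Δ a B)) :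
      TypesX (.exp x P a b) Γ (upd Δ b (Ty.arrow A B))
  | imp {P Q : Net} {Γ Δ : ℕ → Option Ty} {a x : ℕ} {A B : Ty} (y : ℕ)
      (h1 : TypesX P Γ (upd Δ a A)) (h2 : TypesX Q (upd Γ x B) Δ) :
      TypesX (.imp P a y x Q) (upd Γ y (Ty.arrow A B)) Δ
  | cut {P Q : Net} {Γ Δ : ℕ → Option Ty} {a x : ℕ} {A : Ty}
      (h1 : TypesX P Γ (upd Δ a A)) (h2 : TypesX Q (upd Γ x A) Δ) :
      TypesX (.cut P a x Q) Γ Δ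
  | cutL {P Q : Net} {Γ Δ : ℕ → Option Ty} {a x : ℕ} {A : Ty}
      (h1 : TypesX P Γ (upd Δ a A)) (h2 : TypesX Q (upd Γ x A) Δ) :
      TypesX (.cutL P a x Q) Γ Δ
  | cutR {P Q : Net} {Γ Δ : ℕ → Option Ty} {a x : ℕ} {A : Ty}
      (h1 : TypesX P Γ (upd Δ a A)) (h2 : TypesX Q (upd Γ x A) Δ) :
      TypesX (.cutR P a x Q) Γ Δ

/-! ## The asynchronous π-calculus with pairing and non-blocking input -/

/-- π-names: the sockets and plugs of X, plus internal variables. -/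
inductive PName : Type
  | sock : ℕ → PName
  | plug : ℕ → PName
  | var : ℕ → PName
  deriving DecidableEq

/-- Data: a name or a pair of names (pairing is not recursive). -/
inductive PData : Type
  | name : PName → PData
  | pair : PName → PName → PData
  deriving DecidableEq

inductive Proc : Type
  | nil : Proc
  | par : Proc → Proc → Proc
  | repl : Proc → Proc
  | nu : PName → Proc → Proc
  | inp : PName → PName → Proc → Proc          -- a(x).P
  | out : PName → PData → Proc                 -- a⟨p⟩ (asynchronous)
  | letp : PName → PName → PData → Proc → Proc -- let ⟨x,y⟩ = d in P
  deriving DecidableEq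

def fnD : PData → Finset PName
  | .name a => {a}
  | .pair a b => {a, b}

/-- Free names of a process. -/
def fn : Proc → Finset PName
  | .nil => ∅
  | .par P Q => fn P ∪ fn Q
  | .repl P => fn P
  | .nu a P => fn P \ {a}
  | .inp a x P => {a} ∪ (fn P \ {x})
  | .out a p => {a} ∪ fnD p
  | .letp x y d P => fnD d ∪ (fn P \ {x, y})

/-- Substitute datum `p` for name `x` in a name position. -/
def applyN (x : PName) (p : PData) (n : PName) : PName :=
  if n = x then (match p with | .name b => b | .pair _ _ => n) else n

/-- Substitute datum `p` for name `x` in a datum. -/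
def applyD (x : PName) (p : PData) : PData → PData
  | .name n => if n = x then p else .name n
  | .pair a b => .pair (applyN x p a) (applyN x p b)

/-- Substitution of a datum for a free name in a process:  P[p/x]. -/
def psubst : Proc → PName → PData → Proc
  | .nil, _, _ => .nil
  | .par P Q, x, p => .par (psubst P x p) (psubst Q x p)
  | .repl P, x, p => .repl (psubst P x p)
  | .nu a P, x, p => if a = x then .nu a P else .nu a (psubst P x p)
  | .inp a y P, x, p => .inp (applyN x p a) y (if y = x then P else psubst P x p)
  | .out a q, x, p => .out (applyN x p a) (applyD x p q)
  | .letp u v d P, x, p => .letp u v (applyD x p d) (if u = x ∨ v = x then P else psubst P x p)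

/-- Structural congruence. -/
inductive Cong : Proc → Proc → Prop
  | parNil (P : Proc) : Cong (.par P .nil) P
  | parComm (P Q : Proc) : Cong (.par P Q) (.par Q P)
  | parAssoc (P Q R : Proc) : Cong (.par (.par P Q) R) (.par P (.par Q R))
  | nuNil (n : PName) : Cong (.nu n .nil) .nil
  | nuComm (m n : PName) (P : Proc) : Cong (.nu m (.nu n P)) (.nu n (.nu m P))
  | nuPar (n : PName) (P Q : Proc) (h : n ∉ fn P) : Cong (.nu n (.par P Q)) (.par P (.nu n Q))
  | replUnfold (P : Proc) : Cong (.repl P) (.par P (.repl P))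
  | letPair (x y a b : PName) (R : Proc) :
      Cong (.letp x y (.pair a b) R) (psubst (psubst R x (.name a)) y (.name b))
  | refl (P : Proc) : Cong P P
  | symm {P Q : Proc} : Cong P Q → Cong Q P
  | trans {P Q R : Proc} : Cong P Q → Cong Q R → Cong P R
  | parC₁ {P P' : Proc} (Q : Proc) : Cong P P' → Cong (.par P Q) (.par P' Q)
  | parC₂ (P : Proc) {Q Q' : Proc} : Cong Q Q' → Cong (.par P Q) (.par P Q')
  | replC {P P' : Proc} : Cong P P' → Cong (.repl P) (.repl P')
  | nuC (n : PName) {P P' : Proc} : Cong P P' → Cong (.nu n P) (.nu n P')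
  | inpC (a x : PName) {P P' : Proc} : Cong P P' → Cong (.inp a x P) (.inp a x P')
  | letC (x y : PName) (d : PData) {P P' : Proc} :
      Cong P P' → Cong (.letp x y d P) (.letp x y d P')

/-- One-step reduction of π (with non-blocking input). -/
inductive StepPi : Proc → Proc → Prop
  | comm (a : PName) (p : PData) (x : PName) (Q : Proc) :
      StepPi (.par (.out a p) (.inp a x Q)) (psubst Q x p)
  | nu (n : PName) {P P' : Proc} : StepPi P P' → StepPi (.nu n P) (.nu n P')
  | parL {P P' : Proc} (Q : Proc) : StepPi P P' → StepPi (.par P Q) (.par P' Q)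
  | inp (n x : PName) {P Q : Proc} : StepPi P Q → StepPi (.inp n x P) (.inp n x Q)
  | congr {P P' Q Q' : Proc} : Cong P P' → StepPi P' Q' → Cong Q' Q → StepPi P Q

/-- →π+ : the reflexive transitive closure of one-step π reduction. -/
def RedPi : Proc → Proc → Prop := Relation.ReflTransGen StepPi

def nuList : List PName → Proc → Proc
  | [], P => P
  | b :: bs, P => .nu b (nuList bs P)

/-- P↓n : P exhibits a barb on n. -/
def Barb (P : Proc) (n : PName) : Prop :=
  ∃ (bs : List PName) (p : PData) (Q : Proc), n ∉ bs ∧ Cong P (nuList bs (.par (.out n p) Q))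

/-- P⇓n : P weakly exhibits a barb on n. -/
def WeakBarb (P : Proc) (n : PName) : Prop := ∃ P', RedPi P P' ∧ Barb P' n

/-- Process contexts. -/
inductive PCtxt : Type
  | hole : PCtxt
  | parL : PCtxt → Proc → PCtxt
  | parR : Proc → PCtxt → PCtxt
  | repl : PCtxt → PCtxt
  | nu : PName → PCtxt → PCtxt
  | inp : PName → PName → PCtxt → PCtxt
  | letp : PName → PName → PData → PCtxt → PCtxt

def fill : PCtxt → Proc → Proc
  | .hole, P => P
  | .parL C Q, P => .par (fill C P) Q
  | .parR Q C, P => .par Q (fill C P)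
  | .repl C, P => .repl (fill C P)
  | .nu n C, P => .nu n (fill C P)
  | .inp a x C, P => .inp a x (fill C P)
  | .letp x y d C, P => .letp x y d (fill C P)

/-- R is a barbed contextual simulation. -/
def IsSim (R : Proc → Proc → Prop) : Prop :=
  ∀ P Q, R P Q →
    (∀ n, Barb P n → WeakBarb Q n) ∧
    (∀ C P', StepPi (fill C P) P' → ∃ Q', RedPi (fill C Q) Q' ∧ R P' Q')

/-- P ≾ Q : barbed contextual simulation (largest simulation). -/
def BarbedSim (P Q : Proc) : Prop := ∃ R, IsSim R ∧ R P Q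

/-- Type assignment for π:  P : Γ ⊢π Δ. -/
inductive TypesPi : Proc → (PName → Option Ty) → (PName → Option Ty) → Prop
  | nil (Γ Δ : PName → Option Ty) : TypesPi .nil Γ Δ
  | repl {P : Proc} {Γ Δ : PName → Option Ty} : TypesPi P Γ Δ → TypesPi (.repl P) Γ Δ
  | nu {P : Proc} {Γ Δ : PName → Option Ty} {a : PName} {A : Ty} :
      TypesPi P (upd Γ a A) (upd Δ a A) → TypesPi (.nu a P) Γ Δ
  | par {P Q : Proc} {Γ Δ : PName → Option Ty} :
      TypesPi P Γ Δ → TypesPi Q Γ Δ → TypesPi (.par P Q) Γ Δ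
  | inp {P : Proc} {Γ Δ : PName → Option Ty} {x : PName} {A : Ty} (a : PName)
      (h : TypesPi P (upd Γ x A) (upd Δ x A)) : TypesPi (.inp a x P) (upd Γ a A) Δ
  | out (Γ Δ : PName → Option Ty) (a b : PName) (A : Ty) :
      TypesPi (.out a (.name b)) (upd Γ b A) (upd (upd Δ b A) a A)
  | pairOut (Γ Δ : PName → Option Ty) (a b c : PName) (A B : Ty) :
      TypesPi (.out a (.pair b c)) (upd Γ b A) (upd (upd Δ c B) a (Ty.arrow A B))
  | letp {P : Proc} {Γ Δ : PName → Option Ty} {x y : PName} {A B : Ty} (z : PName)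
      (h : TypesPi P (upd Γ y B) (upd Δ x A)) :
      TypesPi (.letp x y (.name z) P) (upd Γ z (Ty.arrow A B)) Δ

/-! ## The encoding of X into π -/

/-- Forwarder a=b := a(o).b⟨o⟩. -/
def fwd (a b : PName) : Proc := .inp a (.var 0) (.out b (.name (.var 0)))

/-- ⟦P α̂†x̂Q⟧ = (να)(⟦P⟧ | !(νx)(α=x | ⟦Q⟧)) | (νx)(!(να)(⟦P⟧ | α=x) | ⟦Q⟧). -/
def encCut (p : Proc) (a x : ℕ) (q : Proc) : Proc :=
  .par (.nu (.plug a) (.par p (.repl (.nu (.sock x) (.par (fwd (.plug a) (.sock x)) q)))))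
       (.nu (.sock x) (.par (.repl (.nu (.plug a) (.par p (fwd (.plug a) (.sock x))))) q))

/-- The encoding ⟦·⟧ of X-nets into π-processes. -/
def encX : Net → Proc
  | .cap x a => fwd (.sock x) (.plug a)
  | .exp y Q b a =>
      .nu (.sock y) (.nu (.plug b)
        (.par (encX Q) (.out (.plug a) (.pair (.sock y) (.plug b)))))
  | .imp P a y x Q =>
      .inp (.sock y) (.var 0) (.letp (.var 1) (.var 2) (.name (.var 0))
        (.par (.nu (.plug a) (.repl (.par (encX P) (fwd (.plug a) (.var 1)))))
              (.nu (.sock x) (.repl (.par (fwd (.var 2) (.sock x)) (encX Q))))))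
  | .cut P a x Q => encCut (encX P) a x (encX Q)
  | .cutL P a x Q => encCut (encX P) a x (encX Q)
  | .cutR P a x Q => encCut (encX P) a x (encX Q)

/-- View an X socket-context as a π context. -/
def sockCtx (Γ : ℕ → Option Ty) : PName → Option Ty
  | .sock n => Γ n
  | _ => none

/-- View an X plug-context as a π context. -/
def plugCtx (Δ : ℕ → Option Ty) : PName → Option Ty
  | .plug n => Δ n
  | _ => none

/-! ## The λ-calculus -/

inductive Lam : Type
  | var : ℕ → Lam
  | abs : ℕ → Lam → Lam
  | app : Lam → Lam → Lam
  deriving DecidableEq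

/-- Substitution M[N/x]. -/
def lsubst : Lam → ℕ → Lam → Lam
  | .var y, x, N => if y = x then N else .var y
  | .abs y M, x, N => if y = x then .abs y M else .abs y (lsubst M x N)
  | .app M₁ M₂, x, N => .app (lsubst M₁ x N) (lsubst M₂ x N)

/-- One-step β-reduction. -/
inductive Beta : Lam → Lam → Prop
  | beta (x : ℕ) (M N : Lam) : Beta (.app (.abs x M) N) (lsubst M x N)
  | appL {M M' : Lam} (N : Lam) : Beta M M' → Beta (.app M N) (.app M' N)
  | appR (M : Lam) {N N' : Lam} : Beta N N' → Beta (.app M N) (.app M N')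
  | abs (x : ℕ) {M M' : Lam} : Beta M M' → Beta (.abs x M) (.abs x M')

/-- Simple type assignment for λ. -/
inductive TypesLam : (ℕ → Option Ty) → Lam → Ty → Prop
  | var {Γ : ℕ → Option Ty} {x : ℕ} {A : Ty} : Γ x = some A → TypesLam Γ (.var x) A
  | abs {Γ : ℕ → Option Ty} {x : ℕ} {M : Lam} {A B : Ty} :
      TypesLam (upd Γ x A) M B → TypesLam Γ (.abs x M) (Ty.arrow A B)
  | app {Γ : ℕ → Option Ty} {M N : Lam} {A B : Ty} :
      TypesLam Γ M (Ty.arrow A B) → TypesLam Γ N A → TypesLam Γ (.app M N) B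

/-- Interpretation of λ into X, with a supply `n` of fresh connectors:
all connectors generated are ≥ n.  ⟦x⟧α = ⟨x·α⟩; ⟦λx.M⟧α = (x̂ ⟦M⟧β β̂)·α (β fresh);
⟦MN⟧α = ⟦M⟧γ γ̂ † x̂ (⟦N⟧β β̂ [x] ŷ ⟨y·α⟩) (γ,β,x,y fresh). -/
def encLamAux : Lam → ℕ → ℕ → Net × ℕ
  | .var x, a, n => (.cap x a, n)
  | .abs x M, a, n =>
      let r := encLamAux M n (n + 1)
      (.exp x r.1 n a, r.2)
  | .app M N, a, n =>
      let r := encLamAux M n (n + 2)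
      let s := encLamAux N (n + 1) r.2
      (.cut r.1 n n (.imp s.1 (n + 1) n (n + 1) (.cap (n + 1) a)), s.2)

/-- A bound above all variables occurring in a λ-term. -/
def lamFresh : Lam → ℕ
  | .var x => x + 1
  | .abs x M => max (x + 1) (lamFresh M)
  | .app M N => max (lamFresh M) (lamFresh N)

/-- ⟦M⟧α : the interpretation of λ into X (fresh names chosen above all of M and α). -/
def encLam (M : Lam) (a : ℕ) : Net := (encLamAux M a (max (lamFresh M) (a + 1))).1

/-- ⟦M⟧πα = ⟦⟦M⟧α⟧ : the interpretation of λ into π via X. -/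
def encLamPi (M : Lam) (a : ℕ) : Proc := encX (encLam M a)

/-!
Types are preserved by each of the two translations. From λ to X no freshness is needed, as the
plug naming the result always carries the type of the term. From X to π it is: the encoding of a cut
`P α̂ † x̂ Q` puts `P` under the binder of `x` and `Q` under that of `α`, which is sound only if
nothing is captured. So X-typings are transported to π for nets obeying a naming convention, and the
nets interpreting λ-terms obey it: their free sockets are variables of the term, lying below the
supply of fresh names, and their only free plug is the one naming the result.
-/

open Set Function

section Contexts

variable {α : Type} [DecidableEq α]

theorem upd_eq_update (Γ : α → Option Ty) (n : α) (A : Ty) : upd Γ n A = update Γ n (some A) := by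
  funext m
  simp only [upd, update_apply]

theorem upd_eq_self {Γ : α → Option Ty} {n : α} {A : Ty} (h : Γ n = some A) : upd Γ n A = Γ := by
  rw [upd_eq_update, ← h, update_eq_self]

theorem upd_apply_self (Γ : α → Option Ty) (n : α) (A : Ty) : upd Γ n A n = some A :=
  if_pos rfl

theorem upd_apply_of_ne {m n : α} (h : m ≠ n) (Γ : α → Option Ty) (A : Ty) :
    upd Γ n A m = Γ m :=
  if_neg h

theorem upd_comp_of_injective {ι : Type} [DecidableEq ι] {f : ι → α} (hf : Injective f)
    (Γ : α → Option Ty) (i : ι) (A : Ty) : upd Γ (f i) A ∘ f = upd (Γ ∘ f) i A := by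
  simp only [upd_eq_update, update_comp_eq_of_injective _ hf]

theorem upd_comp_of_notMem_range {ι : Type} {f : ι → α} {n : α} (hn : n ∉ range f)
    (Γ : α → Option Ty) (A : Ty) : upd Γ n A ∘ f = Γ ∘ f := by
  rw [upd_eq_update, update_comp_eq_of_notMem_range _ _ hn]

theorem eqOn_upd_self {s : Set α} {n : α} (hn : n ∉ s) (Γ : α → Option Ty) (A : Ty) :
    EqOn (upd Γ n A) Γ s :=
  fun _ hm => upd_apply_of_ne (ne_of_mem_of_not_mem hm hn) Γ A

theorem eqOn_upd_upd {Γ Γ' : α → Option Ty} {s : Set α} {n : α} (h : EqOn Γ Γ' (s \ {n}))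
    (A : Ty) : EqOn (upd Γ n A) (upd Γ' n A) s := by
  intro m hm
  by_cases hmn : m = n
  · rw [hmn, upd_apply_self, upd_apply_self]
  · rw [upd_apply_of_ne hmn, upd_apply_of_ne hmn, h ⟨hm, hmn⟩]

end Contexts

section Restriction

variable (Γ : PName → Option Ty) (n : ℕ) (A : Ty)

theorem upd_sock_comp_sock : upd Γ (.sock n) A ∘ PName.sock = upd (Γ ∘ PName.sock) n A :=
  upd_comp_of_injective (fun _ _ => PName.sock.inj) Γ n A

theorem upd_plug_comp_sock : upd Γ (.plug n) A ∘ PName.sock = Γ ∘ PName.sock :=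
  upd_comp_of_notMem_range (by simp) Γ A

theorem upd_var_comp_sock : upd Γ (.var n) A ∘ PName.sock = Γ ∘ PName.sock :=
  upd_comp_of_notMem_range (by simp) Γ A

theorem upd_plug_comp_plug : upd Γ (.plug n) A ∘ PName.plug = upd (Γ ∘ PName.plug) n A :=
  upd_comp_of_injective (fun _ _ => PName.plug.inj) Γ n A

theorem upd_sock_comp_plug : upd Γ (.sock n) A ∘ PName.plug = Γ ∘ PName.plug :=
  upd_comp_of_notMem_range (by simp) Γ A

theorem upd_var_comp_plug : upd Γ (.var n) A ∘ PName.plug = Γ ∘ PName.plug :=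
  upd_comp_of_notMem_range (by simp) Γ A

end Restriction

namespace TypesPi

variable {P : Proc} {Γ Δ : PName → Option Ty} {a b c x y z : PName} {A B : Ty}

theorem inp_of_lookup (ha : Γ a = some A) (h : TypesPi P (upd Γ x A) (upd Δ x A)) :
    TypesPi (.inp a x P) Γ Δ := by
  simpa only [upd_eq_self ha] using TypesPi.inp a h

theorem out_of_lookup (hΓb : Γ b = some A) (hΔb : Δ b = some A) (hΔa : Δ a = some A) :
    TypesPi (.out a (.name b)) Γ Δ := by
  simpa only [upd_eq_self hΓb, upd_eq_self hΔb, upd_eq_self hΔa] using TypesPi.out Γ Δ a b A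

theorem pairOut_of_lookup (hb : Γ b = some A) (hc : Δ c = some B)
    (ha : Δ a = some (.arrow A B)) : TypesPi (.out a (.pair b c)) Γ Δ := by
  simpa only [upd_eq_self hb, upd_eq_self hc, upd_eq_self ha] using TypesPi.pairOut Γ Δ a b c A B

theorem inpPair (ha : Γ a = some (.arrow A B))
    (h : TypesPi P (upd (upd Γ z (.arrow A B)) y B) (upd (upd Δ z (.arrow A B)) x A)) :
    TypesPi (.inp a z (.letp x y (.name z) P)) Γ Δ :=
  inp_of_lookup ha <| by
    simpa only [upd_eq_self (upd_apply_self Γ z (.arrow A B))] using TypesPi.letp z h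

theorem fwd (ha : Γ a = some A) (hb : Δ b = some A) (hb₀ : b ≠ .var 0) :
    TypesPi (fwd a b) Γ Δ :=
  inp_of_lookup ha <| out_of_lookup (upd_apply_self _ _ _) (upd_apply_self _ _ _)
    ((upd_apply_of_ne hb₀ _ _).trans hb)

end TypesPi

/-- The process `p` has the π-typing obtained from the X-contexts `Γ ⊢ Δ`, in every pair of
π-contexts that agrees with `Γ` on the sockets `s` and with `Δ` on the plugs `t`. Leaving the
π-contexts free elsewhere builds weakening into the notion. -/
def TypesPiOn (s t : Finset ℕ) (p : Proc) (Γ Δ : ℕ → Option Ty) : Prop :=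
  ∀ G D : PName → Option Ty, EqOn (G ∘ .sock) Γ s → EqOn (D ∘ .plug) Δ t → TypesPi p G D

namespace TypesPiOn

variable {s t s' t' : Finset ℕ} {p q : Proc} {Γ Δ : ℕ → Option Ty} {a b x y : ℕ} {A B : Ty}

theorem cap : TypesPiOn {x} {a} (fwd (.sock x) (.plug a)) (upd Γ x A) (upd Δ a A) := by
  intro G D hG hD
  have hx : G (.sock x) = some A := by simpa [upd] using hG
  have ha : D (.plug a) = some A := by simpa [upd] using hD
  exact .fwd hx ha (by simp)

theorem exp (hba : b ≠ a) (hb : b ∉ t) (hp : TypesPiOn s t p (upd Γ x A) (upd Δ a B)) :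
    TypesPiOn (s \ {x}) (t \ {a} ∪ {b})
      (.nu (.sock x) (.nu (.plug a) (.par p (.out (.plug b) (.pair (.sock x) (.plug a))))))
      Γ (upd Δ b (.arrow A B)) := by
  intro G D hG hD
  push_cast [eqOn_union, eqOn_singleton] at hG hD
  have hDt : EqOn (D ∘ .plug) Δ (t \ {a}) :=
    hD.1.trans (eqOn_upd_self (fun h => hb h.1) Δ _)
  have hDb : D (.plug b) = some (.arrow A B) := hD.2.trans (upd_apply_self _ _ _)
  refine .nu (A := A) (.nu (A := B) (.par (hp _ _ ?_ ?_) (.pairOut_of_lookup (A := A) (B := B)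
    ?_ ?_ ?_)))
  · rw [upd_plug_comp_sock, upd_sock_comp_sock]
    exact eqOn_upd_upd hG A
  · rw [upd_plug_comp_plug, upd_sock_comp_plug]
    exact eqOn_upd_upd hDt B
  all_goals simp [upd, hba, hDb]

theorem imp (hyP : y ∉ s) (hyQ : y ∉ s' \ {x}) (hp : TypesPiOn s t p Γ (upd Δ a A))
    (hq : TypesPiOn s' t' q (upd Γ x B) Δ) :
    TypesPiOn (s ∪ {y} ∪ s' \ {x}) (t \ {a} ∪ t')
      (.inp (.sock y) (.var 0) (.letp (.var 1) (.var 2) (.name (.var 0))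
        (.par (.nu (.plug a) (.repl (.par p (fwd (.plug a) (.var 1)))))
              (.nu (.sock x) (.repl (.par (fwd (.var 2) (.sock x)) q))))))
      (upd Γ y (.arrow A B)) Δ := by
  intro G D hG hD
  push_cast [eqOn_union, eqOn_singleton] at hG hD
  obtain ⟨⟨hGs, hGy⟩, hGs'⟩ := hG
  obtain ⟨hDt, hDt'⟩ := hD
  replace hGs : EqOn (G ∘ .sock) Γ s := hGs.trans (eqOn_upd_self hyP Γ _)
  replace hGs' : EqOn (G ∘ .sock) Γ (s' \ {x}) :=
    hGs'.trans (eqOn_upd_self (by simpa using hyQ) Γ _)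
  refine .inpPair (hGy.trans (upd_apply_self _ _ _)) (.par
    (.nu (A := A) (.repl (.par (hp _ _ ?_ ?_) (.fwd (A := A) ?_ ?_ (by simp)))))
    (.nu (A := B) (.repl (.par (.fwd (A := B) ?_ ?_ (by simp)) (hq _ _ ?_ ?_)))))
  · simpa only [upd_plug_comp_sock, upd_var_comp_sock] using hGs
  · simpa only [upd_plug_comp_plug, upd_var_comp_plug] using eqOn_upd_upd hDt A
  · simp [upd]
  · simp [upd]
  · simp [upd]
  · simp [upd]
  · simpa only [upd_sock_comp_sock, upd_var_comp_sock] using eqOn_upd_upd hGs' B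
  · simpa only [upd_sock_comp_plug, upd_var_comp_plug] using hDt'

theorem cut (hx : x ∉ s) (ha : a ∉ t') (hp : TypesPiOn s t p Γ (upd Δ a A))
    (hq : TypesPiOn s' t' q (upd Γ x A) Δ) :
    TypesPiOn (s ∪ s' \ {x}) (t \ {a} ∪ t') (encCut p a x q) Γ Δ := by
  intro G D hG hD
  push_cast [eqOn_union] at hG hD
  obtain ⟨hGs, hGs'⟩ := hG
  obtain ⟨hDt, hDt'⟩ := hD
  have hGx : EqOn (upd (G ∘ .sock) x A) Γ s := (eqOn_upd_self hx _ A).trans hGs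
  have hDa : EqOn (upd (D ∘ .plug) a A) Δ t' := (eqOn_upd_self ha _ A).trans hDt'
  refine .par (.nu (A := A) (.par (hp _ _ ?_ ?_)
      (.repl (.nu (A := A) (.par (.fwd (A := A) ?_ ?_ (by simp)) (hq _ _ ?_ ?_))))))
    (.nu (A := A) (.par
      (.repl (.nu (A := A) (.par (hp _ _ ?_ ?_) (.fwd (A := A) ?_ ?_ (by simp))))) (hq _ _ ?_ ?_)))
  · simpa only [upd_plug_comp_sock] using hGs
  · simpa only [upd_plug_comp_plug] using eqOn_upd_upd hDt A
  · simp [upd]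
  · simp [upd]
  · simpa only [upd_sock_comp_sock, upd_plug_comp_sock] using eqOn_upd_upd hGs' A
  · simpa only [upd_sock_comp_plug, upd_plug_comp_plug] using hDa
  · simpa only [upd_plug_comp_sock, upd_sock_comp_sock] using hGx
  · simpa only [upd_plug_comp_plug, upd_sock_comp_plug] using eqOn_upd_upd hDt A
  · simp [upd]
  · simp [upd]
  · simpa only [upd_sock_comp_sock] using eqOn_upd_upd hGs' A
  · simpa only [upd_sock_comp_plug] using hDt'

end TypesPiOn

/-- The naming convention under which the encoding of X into π preserves types. A cut is encoded by
placing both nets under both binders, so neither bound connector may be free in the opposite net;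
likewise the output on `b` that encodes an export lies under the binder of `a`. Moreover `upd`
overwrites: if the connector introduced by an export or import occurred in its subnets, the type
under which they use it could be lost. -/
def WellNamed : Net → Prop
  | .cap _ _ => True
  | .exp _ P a b => b ≠ a ∧ b ∉ fp P ∧ WellNamed P
  | .imp P _ y x Q => y ∉ fs P ∧ y ∉ fs Q \ {x} ∧ WellNamed P ∧ WellNamed Q
  | .cut P a x Q => x ∉ fs P ∧ a ∉ fp Q ∧ WellNamed P ∧ WellNamed Q
  | .cutL P a x Q => x ∉ fs P ∧ a ∉ fp Q ∧ WellNamed P ∧ WellNamed Q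
  | .cutR P a x Q => x ∉ fs P ∧ a ∉ fp Q ∧ WellNamed P ∧ WellNamed Q

theorem typesPiOn_encX {P : Net} {Γ Δ : ℕ → Option Ty} (h : TypesX P Γ Δ) (hP : WellNamed P) :
    TypesPiOn (fs P) (fp P) (encX P) Γ Δ := by
  induction h with
  | cap => exact .cap
  | exp _ _ ih =>
    obtain ⟨hba, hb, hP⟩ := hP
    exact .exp hba hb (ih hP)
  | imp _ _ _ ihP ihQ =>
    obtain ⟨hyP, hyQ, hP, hQ⟩ := hP
    exact .imp hyP hyQ (ihP hP) (ihQ hQ)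
  | cut _ _ ihP ihQ | cutL _ _ ihP ihQ | cutR _ _ ihP ihQ =>
    obtain ⟨hx, ha, hP, hQ⟩ := hP
    exact .cut hx ha (ihP hP) (ihQ hQ)

theorem typesPi_encX {P : Net} {Γ Δ : ℕ → Option Ty} (h : TypesX P Γ Δ) (hP : WellNamed P) :
    TypesPi (encX P) (sockCtx Γ) (plugCtx Δ) :=
  typesPiOn_encX h hP _ _ (fun _ _ => rfl) (fun _ _ => rfl)

namespace TypesX

variable {P : Net} {Γ Δ : ℕ → Option Ty} {a b x y : ℕ} {A B : Ty}

theorem cap_of_lookup (hx : Γ x = some A) (ha : Δ a = some A) : TypesX (.cap x a) Γ Δ := by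
  simpa only [upd_eq_self hx, upd_eq_self ha] using TypesX.cap Γ Δ x a A

theorem exp_of_lookup (hb : Δ b = some (.arrow A B)) (h : TypesX P (upd Γ x A) (upd Δ a B)) :
    TypesX (.exp x P a b) Γ Δ := by
  simpa only [upd_eq_self hb] using TypesX.exp b h

end TypesX

theorem typesX_encLamAux {Γ Δ : ℕ → Option Ty} {M : Lam} {A : Ty} {a : ℕ} (h : TypesLam Γ M A)
    (ha : Δ a = some A) (n : ℕ) : TypesX (encLamAux M a n).1 Γ Δ := by
  induction h generalizing Δ a n with
  | var hx => exact .cap_of_lookup hx ha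
  | abs _ ih => exact .exp_of_lookup ha (ih (upd_apply_self _ _ _) _)
  | app _ _ ihM ihN =>
    exact .cut (ihM (upd_apply_self _ _ _) _)
      (.imp _ (ihN (upd_apply_self _ _ _) _) (.cap_of_lookup (upd_apply_self _ _ _) ha))

theorem typesX_encLam {Γ : ℕ → Option Ty} {M : Lam} {A : Ty} (h : TypesLam Γ M A) (a : ℕ) :
    TypesX (encLam M a) Γ (upd emptyCtx a A) :=
  typesX_encLamAux h (upd_apply_self _ _ _) _

theorem fs_encLamAux_subset (M : Lam) (a n : ℕ) :
    fs (encLamAux M a n).1 ⊆ Finset.range (lamFresh M) := by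
  induction M generalizing a n with
  | var => simp [encLamAux, fs, lamFresh]
  | abs _ _ ih =>
    exact Finset.sdiff_subset.trans ((ih _ _).trans (Finset.range_mono (le_max_right _ _)))
  | app M N ihM ihN =>
    have hM := (ihM n (n + 2)).trans (Finset.range_mono (le_max_left _ (lamFresh N)))
    have hN := (ihN (n + 1) (encLamAux M n (n + 2)).2).trans
      (Finset.range_mono (le_max_right (lamFresh M) _))
    simp only [encLamAux, fs, lamFresh]
    grind

theorem fp_encLamAux (M : Lam) (a n : ℕ) : fp (encLamAux M a n).1 = {a} := by
  induction M generalizing a n with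
  | var => rfl
  | abs _ _ ih => simp [encLamAux, fp, ih]
  | app _ _ ihM ihN => simp [encLamAux, fp, ihM, ihN]

theorem le_encLamAux_snd (M : Lam) (a n : ℕ) : n ≤ (encLamAux M a n).2 := by
  induction M generalizing a n with
  | var => exact le_rfl
  | abs _ _ ih => exact (Nat.le_succ n).trans (ih _ _)
  | app _ _ ihM ihN => exact (Nat.le_add_right n 2).trans ((ihM _ _).trans (ihN _ _))

theorem notMem_fs_encLamAux {M : Lam} {x : ℕ} (hx : lamFresh M ≤ x) (a n : ℕ) :
    x ∉ fs (encLamAux M a n).1 :=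
  fun h => (Finset.mem_range.1 (fs_encLamAux_subset M a n h)).not_ge hx

theorem wellNamed_encLamAux {M : Lam} {a n : ℕ} (ha : a < n) (hM : lamFresh M ≤ n) :
    WellNamed (encLamAux M a n).1 := by
  induction M generalizing a n with
  | var => trivial
  | abs _ _ ih =>
    refine ⟨ha.ne, ?_, ih n.lt_succ_self ((le_max_right _ _).trans (hM.trans n.le_succ))⟩
    simpa only [fp_encLamAux, Finset.mem_singleton] using ha.ne
  | app M N ihM ihN =>
    obtain ⟨hM, hN⟩ := max_le_iff.1 hM
    have hsupply : n + 2 ≤ (encLamAux M n (n + 2)).2 := le_encLamAux_snd M n (n + 2)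
    refine ⟨notMem_fs_encLamAux hM _ _, ?_, ihM (by omega) (by omega),
      notMem_fs_encLamAux hN _ _, ?_, ihN (by omega) (by omega), trivial⟩
    · simp [fp, fp_encLamAux, ha.ne']
    · simp [fs]

theorem wellNamed_encLam (M : Lam) (a : ℕ) : WellNamed (encLam M a) :=
  wellNamed_encLamAux (le_max_right (lamFresh M) (a + 1)) (le_max_left _ _)

/-- Simulation of the λ-calculus in π (types). -/
theorem lam_types (Γ : ℕ → Option Ty) (M : Lam) (A : Ty) (h : TypesLam Γ M A) (a : ℕ) :
    TypesPi (encLamPi M a) (sockCtx Γ) (plugCtx (upd emptyCtx a A)) :=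
  typesPi_encX (typesX_encLam h a) (wellNamed_encLam M a)
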